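/- For r ∈ ℕ and any integer k ≥ 2r−1, let G = P_k be the path whose vertices in order are v_1,…,v_k. Let S be the shield of G defined by S(v_1) = S(v_k) = 1 and S(v_i) = r+1 for all i with 2 ≤ i ≤ k−1, and let T be the target of G defined by T(v_i) = r for all i ∈ {1,…,k}. Then G is ST^(4)-(S,T)-degenerate. -/

import Mathlib

/-!
Number the vertices `v_1, …, v_k`. Only the even vertices `v_{2j}` are operated on at first, each
exactly `r` times; they form an independent set, so their own shields never drop. The vertex
`v_{2j}` uses its first `j` operations to shade its left neighbour (saving the right one) and the
remaining ones to shade its right neighbour (saving the left one).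

Shields suffice: an inner odd vertex `v_{2j+1}` is shaded at most `j + 1` times from the right and
`r - j` times from the left, `r + 1` in total; `v_1` is shaded once, and `v_k` (for odd `k`) at most
`r - (k - 1) / 2 ≤ 1` times, which is where `k ≥ 2r - 1` enters (`shadeCount_le`).

The order is: `r` sweeps over the even vertices, each from right to left. In the sweep with `q`
completed operations per vertex, `v_{2j}` has shield plus target `2r + 1 - q` if `2j < k`, while
for `2j = k` it only ever shades its left neighbour and saves nothing. The neighbour `v_{2j}`
saves has already been shaded more than `q` times: if `q < j` it is the right neighbour, shaded in
every sweep so far, including the present one, by `v_{2j+2}`; if `j ≤ q` it is the left neighbour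
`v_{2j-1}`, shaded `j` times by `v_{2j}` and `q - (j - 1)` times by `v_{2j-2}`. If the saved
neighbour is an end of the path, its initial value is only `r + 1`. So every operation is legal
(`good_step`). After all sweeps the remaining odd vertices are pairwise nonadjacent and can be
finished off with nothing to shade (`good_of_indep`).
-/

open scoped Classical

noncomputable section

namespace StrictDeg

/-- The state of the `ShadeSave` process: the active vertex set (the vertex set of the
current induced subgraph), the current shield, and the current target. -/
structure State (V : Type) where
  A : Finset V
  S : V → ℕ
  T : V → ℕ

variable {V : Type}

/-- The output of the operation `ShadeSave(G[A], S, T, u, W)`. -/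
def applyStep (G : SimpleGraph V) (st : State V) (u : V) (W : Finset V) : State V where
  A := if st.T u = 1 then st.A.erase u else st.A
  S := fun v => if G.Adj u v ∧ v ∈ st.A ∧ v ∉ W then st.S v - 1 else st.S v
  T := fun v => if v = u ∧ 1 < st.T u then st.T u - 1 else st.T v

/-- Legality of the operation `ShadeSave(G[A], S, T, u, W)`:  `u` is a vertex of the current
graph, `W` is a set of neighbors of `u` in the current graph,
`S u + T u > ∑_{w ∈ W} (S w + T w)`, and the output shield is nonnegative (in `ℕ` terms:
every neighbor of `u` in the current graph that is not saved has shield value at least 1). -/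
def LegalStep (G : SimpleGraph V) (st : State V) (u : V) (W : Finset V) : Prop :=
  u ∈ st.A ∧
  (∀ w ∈ W, w ∈ st.A ∧ G.Adj u w) ∧
  (∑ w ∈ W, (st.S w + st.T w)) < st.S u + st.T u ∧
  (∀ v ∈ st.A, G.Adj u v → v ∉ W → 1 ≤ st.S v)

/-- `LegalSeq G st l` means `l` is a legal sequence of `ShadeSave` operations starting
from the state `st`. -/
def LegalSeq (G : SimpleGraph V) : State V → List (V × Finset V) → Prop
  | _, [] => True
  | st, op :: rest => LegalStep G st op.1 op.2 ∧ LegalSeq G (applyStep G st op.1 op.2) rest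

/-- The final state after applying the operations in `l` in order. -/
def finalState (G : SimpleGraph V) (st : State V) (l : List (V × Finset V)) : State V :=
  l.foldl (fun s op => applyStep G s op.1 op.2) st

/-- The induced subgraph of `G` on `A`, with shield `S` and target `T`, admits a complete
legal sequence, i.e. it is `ST⁽³⁾`-`(S,T)`-degenerate. -/
def ST3DegOn (G : SimpleGraph V) (A : Finset V) (S T : V → ℕ) : Prop :=
  ∃ l : List (V × Finset V),
    LegalSeq G ⟨A, S, T⟩ l ∧ (finalState G ⟨A, S, T⟩ l).A = ∅

/-- The induced subgraph of `G` on `A`, with shield `S` and target `T`, admits a complete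
restricted (every operation saves on at most one vertex) legal sequence, i.e. it is
`ST⁽⁴⁾`-`(S,T)`-degenerate. -/
def ST4DegOn (G : SimpleGraph V) (A : Finset V) (S T : V → ℕ) : Prop :=
  ∃ l : List (V × Finset V),
    LegalSeq G ⟨A, S, T⟩ l ∧ (∀ op ∈ l, op.2.card ≤ 1) ∧
      (finalState G ⟨A, S, T⟩ l).A = ∅

/-- `G` is `ST⁽³⁾`-`(S,T)`-degenerate. -/
def ST3Deg [Fintype V] (G : SimpleGraph V) (S T : V → ℕ) : Prop :=
  ST3DegOn G Finset.univ S T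

/-- `G` is `ST⁽⁴⁾`-`(S,T)`-degenerate. -/
def ST4Deg [Fintype V] (G : SimpleGraph V) (S T : V → ℕ) : Prop :=
  ST4DegOn G Finset.univ S T

/-- The fractional strict type-3 degeneracy
`ST⁽³⁾*(G) = inf {(s+t)/t : G is ST⁽³⁾-(s,t)-degenerate}`. -/
def ST3Star [Fintype V] (G : SimpleGraph V) : ℝ :=
  sInf { x : ℝ | ∃ s t : ℕ, 1 ≤ t ∧ ST3Deg G (fun _ => s) (fun _ => t) ∧
    x = ((s : ℝ) + t) / t }

/-- The fractional strict type-4 degeneracy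
`ST⁽⁴⁾*(G) = inf {(s+t)/t : G is ST⁽⁴⁾-(s,t)-degenerate}`. -/
def ST4Star [Fintype V] (G : SimpleGraph V) : ℝ :=
  sInf { x : ℝ | ∃ s t : ℕ, 1 ≤ t ∧ ST4Deg G (fun _ => s) (fun _ => t) ∧
    x = ((s : ℝ) + t) / t }

/-- A cover `𝓗 = (L, H)` of the graph `G`. -/
structure Cover (G : SimpleGraph V) where
  /-- The vertex type of the cover graph `H`. -/
  U : Type
  fin : Fintype U
  /-- The cover graph. -/
  H : SimpleGraph U
  /-- The lists: `L v` is the part of the partition of `V(H)` corresponding to `v`. -/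
  L : V → Finset U
  part : ∀ x : U, ∃! v : V, x ∈ L v
  indep : ∀ v : V, ∀ x ∈ L v, ∀ y ∈ L v, ¬ H.Adj x y
  cross : ∀ u v : V, ∀ x ∈ L u, ∀ y ∈ L v, H.Adj x y → G.Adj u v
  matching : ∀ u v : V, G.Adj u v → ∀ x ∈ L u, ∀ y ∈ L v, ∀ y' ∈ L v,
      H.Adj x y → H.Adj x y' → y = y'

/-- `G` is `(𝓗, b)`-colorable: there is an independent set of the cover graph meeting
every list in at least `b` vertices. -/
def Cover.Colorable {G : SimpleGraph V} (C : Cover G) (b : ℕ) : Prop :=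
  ∃ I : Finset C.U, (∀ x ∈ I, ∀ y ∈ I, ¬ C.H.Adj x y) ∧ ∀ v : V, b ≤ (I ∩ C.L v).card

/-- `G` is `(a,b)`-DP-colorable. -/
def DPColorable (G : SimpleGraph V) (a b : ℕ) : Prop :=
  ∀ C : Cover G, (∀ v : V, (C.L v).card = a) → C.Colorable b

/-- The fractional DP-chromatic number
`χ*_DP(G) = inf {a/b : G is (a,b)-DP-colorable}`. -/
def DPStar (G : SimpleGraph V) : ℝ :=
  sInf { x : ℝ | ∃ a b : ℕ, 1 ≤ b ∧ b ≤ a ∧ DPColorable G a b ∧ x = (a : ℝ) / b }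

/-- `G` is `(F₁, F₂)`-DP-colorable. -/
def DPColorableFn (G : SimpleGraph V) (F₁ F₂ : V → ℕ) : Prop :=
  ∀ C : Cover G, (∀ v : V, (C.L v).card = F₁ v) →
    ∃ I : Finset C.U, (∀ x ∈ I, ∀ y ∈ I, ¬ C.H.Adj x y) ∧
      ∀ v : V, (I ∩ C.L v).card = F₂ v


/-! ### Composing legal operations -/

/-- The state `st` admits a complete restricted legal sequence. -/
def Good (G : SimpleGraph V) (st : State V) : Prop :=
  ∃ l : List (V × Finset V),
    LegalSeq G st l ∧ (∀ op ∈ l, op.2.card ≤ 1) ∧ (finalState G st l).A = ∅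

lemma Good.of_step {G : SimpleGraph V} {st : State V} (u : V) (W : Finset V)
    (hl : LegalStep G st u W) (hW : W.card ≤ 1) (h : Good G (applyStep G st u W)) :
    Good G st := by
  obtain ⟨l, h1, h2, h3⟩ := h
  refine ⟨(u, W) :: l, ⟨hl, h1⟩, ?_, h3⟩
  intro op hop
  rcases List.mem_cons.1 hop with rfl | hop
  · exact hW
  · exact h2 op hop

/-- If the active vertices are pairwise nonadjacent, operations with `W = ∅` shade nothing and
finish the process, whatever the shields are. -/
lemma good_of_indep (G : SimpleGraph V) (N : ℕ) : ∀ st : State V,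
    ∑ v ∈ st.A, st.T v = N → (∀ u ∈ st.A, ∀ v ∈ st.A, ¬ G.Adj u v) →
    (∀ v ∈ st.A, 1 ≤ st.T v) → Good G st := by
  induction N using Nat.strong_induction_on with
  | _ N ih =>
    intro st hN hind hT
    rcases st.A.eq_empty_or_nonempty with hA | ⟨u, hu⟩
    · exact ⟨[], trivial, by simp, hA⟩
    have hTu := hT u hu
    refine Good.of_step u ∅ ⟨hu, by simp, by simp; omega, ?_⟩ (by simp) ?_
    · intro v hv hadj
      exact absurd hadj (hind u hu v hv)
    by_cases h1 : st.T u = 1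
    · have hT' : (applyStep G st u ∅).T = st.T := by
        funext v
        simp [applyStep, h1]
      have hA' : (applyStep G st u ∅).A = st.A.erase u := by simp [applyStep, h1]
      refine ih _ ?_ _ rfl ?_ ?_
      · rw [hA', hT', ← hN, ← Finset.sum_erase_add _ _ hu]
        omega
      · rw [hA']
        intro a ha b hb
        exact hind a (Finset.mem_of_mem_erase ha) b (Finset.mem_of_mem_erase hb)
      · rw [hA', hT']
        intro a ha
        exact hT a (Finset.mem_of_mem_erase ha)
    · have h2 : 1 < st.T u := by omega
      have hT' : ∀ v, (applyStep G st u ∅).T v = if v = u then st.T u - 1 else st.T v := by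
        intro v
        simp [applyStep, h2]
      have hA' : (applyStep G st u ∅).A = st.A := by simp [applyStep, h1]
      refine ih _ ?_ _ rfl ?_ ?_
      · rw [hA', ← hN]
        refine Finset.sum_lt_sum ?_ ⟨u, hu, ?_⟩
        · intro v _
          rw [hT']
          split_ifs with h
          · subst h; omega
          · exact le_rfl
        · rw [hT', if_pos rfl]
          omega
      · rw [hA']
        exact hind
      · rw [hA']
        intro v hv
        rw [hT']
        split_ifs
        · omega
        · exact hT v hv

/-! ### Operation counts and shade counts -/

/-- Operation counts for the even vertices: `n j` is the number of operations performed so far on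
`v_{2j}`. Values at indices with no such vertex (`j = 0` or `2j > k`) are zero. -/
structure ValidCount (r k : ℕ) (n : ℕ → ℕ) : Prop where
  zero : n 0 = 0
  le : ∀ j, n j ≤ r
  out : ∀ j, k < 2 * j → n j = 0

/-- The number of times the vertex with zero-based index `i` has been shaded. For `i = 2j`, that is
for `v_{2j+1}`, it is shaded by all operations on `v_{2j}` except the first `j`, and by the first
`j + 1` operations on `v_{2j+2}`. -/
def shadeCount (n : ℕ → ℕ) (i : ℕ) : ℕ :=
  if i % 2 = 0 then (n (i / 2) - i / 2) + min (n (i / 2 + 1)) (i / 2 + 1) else 0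

/-- The initial shield, as a function of the zero-based index. -/
def shield₀ (r k i : ℕ) : ℕ := if i = 0 ∨ i = k - 1 then 1 else r + 1

lemma shadeCount_le {r k : ℕ} (hk : 2 * r - 1 ≤ k) {n : ℕ → ℕ} (hn : ValidCount r k n)
    {i : ℕ} (hi : i < k) : shadeCount n i ≤ shield₀ r k i := by
  have h0 := hn.zero
  have h1 := hn.le (i / 2)
  have h2 := hn.le (i / 2 + 1)
  have h3 := hn.out (i / 2 + 1)
  unfold shadeCount shield₀
  by_cases hi0 : i = 0
  · subst hi0
    simp [h0]
  · split_ifs <;> omega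

/-! ### Legality of a single operation -/

/-- The state `st` is the one reached after `n j` operations on each `v_{2j}`. The even vertices
have odd zero-based index. Values of shield and target matter only on active vertices. -/
structure Inv (r k : ℕ) (n : ℕ → ℕ) (st : State (Fin k)) : Prop where
  mem : ∀ i : Fin k, i ∈ st.A ↔ (i.val % 2 = 1 → n ((i.val + 1) / 2) < r)
  target : ∀ i ∈ st.A, st.T i = if i.val % 2 = 1 then r - n ((i.val + 1) / 2) else r
  shield : ∀ i ∈ st.A, st.S i + shadeCount n i.val = shield₀ r k i.val

lemma sum_lt_of_card_le_one {W : Finset V} (hW : W.card ≤ 1) {f : V → ℕ} {b : ℕ} (hb : 0 < b)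
    (h : ∀ w ∈ W, f w < b) : ∑ w ∈ W, f w < b := by
  rcases Nat.le_one_iff_eq_zero_or_eq_one.1 hW with h0 | h1
  · rw [Finset.card_eq_zero.1 h0]
    simpa using hb
  · obtain ⟨a, rfl⟩ := Finset.card_eq_one.1 h1
    simpa using h

/-- The zero-based index of the neighbour of `v_{2j}` saved by its `(q + 1)`-st operation. -/
def saved (j q : ℕ) : ℕ := if q < j then 2 * j else 2 * j - 2

/-- One more operation on `v_{2j}` raises the shade count of its unsaved neighbour by one and
changes no other shade count. -/
lemma shadeCount_update {n n' : ℕ → ℕ} {j : ℕ} (hj : 1 ≤ j) (hj' : n' j = n j + 1)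
    (hne : ∀ i, i ≠ j → n' i = n i) (i : ℕ) :
    shadeCount n' i =
      if (i + 1 = 2 * j - 1 ∨ 2 * j - 1 + 1 = i) ∧ i ≠ saved j (n j) then shadeCount n i + 1
      else shadeCount n i := by
  unfold shadeCount saved
  by_cases hp : i % 2 = 0
  · rw [if_pos hp, if_pos hp]
    by_cases ha : i / 2 = j
    · have hb := hne (i / 2 + 1) (by omega)
      rw [hb, ha, hj']
      split_ifs <;> omega
    · by_cases hb : i / 2 + 1 = j
      · rw [hne _ ha, hb, hj']
        split_ifs <;> omega
      · rw [hne _ ha, hne _ hb]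
        split_ifs <;> omega
  · rw [if_neg hp, if_neg hp]
    split_ifs <;> omega

/-- The next operation on `v_{2j}` is legal provided that `v_{2j+2}`, if it exists, is ahead of
`v_{2j}`, and `v_{2j-2}`, if it exists, is not behind it. -/
lemma good_step {r k : ℕ} (hk : 2 * r - 1 ≤ k) {n n' : ℕ → ℕ} {j : ℕ}
    (hj : 1 ≤ j) (hjk : 2 * j ≤ k) (hn' : ValidCount r k n')
    (hj' : n' j = n j + 1) (hne : ∀ i, i ≠ j → n' i = n i)
    (hright : 2 * (j + 1) ≤ k → n j < n (j + 1)) (hleft : 2 ≤ j → n j ≤ n (j - 1))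
    (h : ∀ st, Inv r k n' st → Good (SimpleGraph.pathGraph k) st)
    (st : State (Fin k)) (hst : Inv r k n st) : Good (SimpleGraph.pathGraph k) st := by
  have hjr : n j < r := by have := hn'.le j; omega
  let u : Fin k := ⟨2 * j - 1, by omega⟩
  have huval : u.val = 2 * j - 1 := rfl
  have hu2 : (u.val + 1) / 2 = j := by omega
  have humod : u.val % 2 = 1 := by omega
  let W : Finset (Fin k) := Finset.univ.filter fun v => v.val = saved j (n j)
  have hWmem : ∀ v, v ∈ W ↔ v.val = saved j (n j) := by intro v; simp [W]
  have hWcard : W.card ≤ 1 := by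
    refine Finset.card_le_one.2 fun a ha b hb => Fin.ext ?_
    rw [(hWmem a).1 ha, (hWmem b).1 hb]
  have hsaved : saved j (n j) = 2 * j ∨ saved j (n j) = 2 * j - 2 := by
    unfold saved
    split_ifs <;> simp
  have hadj : ∀ v : Fin k, (SimpleGraph.pathGraph k).Adj u v ↔
      (v.val + 1 = 2 * j - 1 ∨ 2 * j - 1 + 1 = v.val) := by
    intro v
    rw [SimpleGraph.pathGraph_adj, huval]
    exact or_comm
  have huA : u ∈ st.A := by
    rw [hst.mem, hu2]
    exact fun _ => hjr
  have hevenA : ∀ v : Fin k, v.val % 2 = 0 → v ∈ st.A := by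
    intro v hv
    rw [hst.mem]
    omega
  have hTu : st.T u = r - n j := by
    rw [hst.target u huA, if_pos humod, hu2]
  have hSu : st.S u = shield₀ r k (2 * j - 1) := by
    have := hst.shield u huA
    rw [shadeCount, if_neg (by omega)] at this
    exact this
  have hupd := shadeCount_update hj hj' hne
  refine Good.of_step u W ⟨huA, ?_, ?_, ?_⟩ hWcard (h _ ?_)
  · intro w hw
    have hw' := (hWmem w).1 hw
    refine ⟨hevenA w (by omega), ?_⟩
    rw [hadj]
    omega
  · refine sum_lt_of_card_le_one hWcard (by omega) ?_
    intro w hw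
    have hw' := (hWmem w).1 hw
    have hwk := w.isLt
    have hwA := hevenA w (by omega)
    have hTw : st.T w = r := by
      rw [hst.target w hwA, if_neg (by omega)]
    have hSw := hst.shield w hwA
    rw [hTw, hSu, hTu]
    -- `v_{2j}` is not the last vertex, so its shield is `r + 1`: if `n j < j`, its right neighbour
    -- `w` exists; otherwise `2j ≤ 2 (n j) ≤ 2r - 2 < k`.
    unfold saved at hw'
    by_cases hq : n j < j
    · rw [if_pos hq] at hw'
      rw [hw'] at hSw
      rw [shadeCount, if_pos (by omega), show 2 * j / 2 = j by omega] at hSw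
      unfold shield₀ at hSw ⊢
      split_ifs at hSw ⊢ <;> omega
    · rw [if_neg hq] at hw'
      rw [hw'] at hSw
      rw [shadeCount, if_pos (by omega), show (2 * j - 2) / 2 = j - 1 by omega,
        show j - 1 + 1 = j by omega] at hSw
      unfold shield₀ at hSw ⊢
      split_ifs at hSw ⊢ <;> omega
  · intro v hv hav hvW
    rw [hadj] at hav
    rw [hWmem] at hvW
    have h1 := hupd v.val
    rw [if_pos ⟨hav, hvW⟩] at h1
    have h2 := shadeCount_le hk hn' v.isLt
    have h3 := hst.shield v hv
    omega
  · have hsub : ∀ v, v ∈ (applyStep (SimpleGraph.pathGraph k) st u W).A →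
        v ∈ st.A ∧ (v = u → 1 < st.T u) := by
      intro v hv
      simp only [applyStep] at hv
      split_ifs at hv with h1
      · simp only [Finset.mem_erase] at hv
        exact ⟨hv.2, fun e => absurd e hv.1⟩
      · exact ⟨hv, fun _ => by omega⟩
    refine ⟨?_, ?_, ?_⟩
    · intro v
      have hmem := hst.mem v
      by_cases hvu : v = u
      · subst hvu
        rw [hu2, hj']
        simp only [applyStep]
        split_ifs with h1
        · simp only [Finset.mem_erase, ne_eq, not_true_eq_false, false_and, false_iff]
          omega
        · simp only [huA, true_iff]
          omega
      · have hvu' : v.val ≠ 2 * j - 1 := fun e => hvu (Fin.ext e)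
        have hA : v ∈ (applyStep (SimpleGraph.pathGraph k) st u W).A ↔ v ∈ st.A := by
          simp only [applyStep]
          split_ifs <;> simp [hvu]
        rw [hA, hmem]
        refine imp_congr_right fun hodd => ?_
        rw [hne _ (by omega)]
    · intro v hv
      obtain ⟨hvA, hvT⟩ := hsub v hv
      by_cases hvu : v = u
      · subst hvu
        have h1 := hvT rfl
        simp only [applyStep]
        rw [if_pos ⟨trivial, h1⟩, if_pos humod, hu2, hj', hTu]
        omega
      · have hvu' : v.val ≠ 2 * j - 1 := fun e => hvu (Fin.ext e)
        have := hst.target v hvA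
        simp only [applyStep]
        rw [if_neg (fun e => hvu e.1), this]
        split_ifs with hodd
        · rw [hne _ (by omega)]
        · rfl
    · intro v hv
      obtain ⟨hvA, -⟩ := hsub v hv
      have h1 := hupd v.val
      have h2 := shadeCount_le hk hn' v.isLt
      have h3 := hst.shield v hvA
      simp only [applyStep, hadj, hWmem, hvA, true_and]
      split_ifs at h1 ⊢ <;> omega

/-! ### Sweeps from right to left -/

/-- Counts in the middle of a sweep: `v_{2j}` has been operated on `q + 1` times for `j > m` and
`q` times for `j ≤ m`. -/
def sweep (k q m j : ℕ) : ℕ :=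
  if j = 0 ∨ k < 2 * j then 0 else if m < j then q + 1 else q

lemma sweep_valid {r k q m : ℕ} (h : q < r ∨ q = r ∧ k / 2 ≤ m) :
    ValidCount r k (sweep k q m) := by
  refine ⟨by simp [sweep], fun j => ?_, fun j hj => by simp [sweep, hj]⟩
  unfold sweep
  split_ifs <;> omega

lemma sweep_zero (k q : ℕ) : sweep k q 0 = sweep k (q + 1) (k / 2) := by
  funext j
  unfold sweep
  split_ifs <;> omega

/-- After all sweeps only the odd vertices remain. -/
lemma good_final {r k : ℕ} (hr : 1 ≤ r) (st : State (Fin k))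
    (hst : Inv r k (sweep k r (k / 2)) st) : Good (SimpleGraph.pathGraph k) st := by
  have heven : ∀ v ∈ st.A, v.val % 2 = 0 := by
    intro v hv
    by_contra hodd
    have h1 := (hst.mem v).1 hv (by omega)
    have h2 := v.isLt
    unfold sweep at h1
    split_ifs at h1 <;> omega
  refine good_of_indep _ _ st rfl ?_ ?_
  · intro a ha b hb hab
    have h1 := heven a ha
    have h2 := heven b hb
    rw [SimpleGraph.pathGraph_adj] at hab
    omega
  · intro v hv
    have := heven v hv
    rw [hst.target v hv, if_neg (by omega)]
    exact hr

lemma good_sweep {r k : ℕ} (hk : 2 * r - 1 ≤ k) {q : ℕ} (hq : q < r)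
    (h : ∀ st, Inv r k (sweep k (q + 1) (k / 2)) st → Good (SimpleGraph.pathGraph k) st)
    (m : ℕ) (hm : m ≤ k / 2) :
    ∀ st, Inv r k (sweep k q m) st → Good (SimpleGraph.pathGraph k) st := by
  induction m with
  | zero => rwa [sweep_zero]
  | succ m ih =>
    refine good_step (j := m + 1) (n' := sweep k q m) hk (by omega) (by omega)
      (sweep_valid (Or.inl hq)) ?_ ?_ ?_ ?_ (ih (by omega))
    · unfold sweep
      grind
    · intro i hi
      unfold sweep
      grind
    · intro _
      unfold sweep
      grind
    · intro _
      unfold sweep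
      grind

lemma good_sweeps {r k : ℕ} (hr : 1 ≤ r) (hk : 2 * r - 1 ≤ k) (d : ℕ) (hd : d ≤ r) :
    ∀ st, Inv r k (sweep k (r - d) (k / 2)) st → Good (SimpleGraph.pathGraph k) st := by
  induction d with
  | zero => exact good_final hr
  | succ d ih =>
    refine good_sweep hk (by omega) ?_ _ le_rfl
    rw [show r - (d + 1) + 1 = r - d by omega]
    exact ih (by omega)

/-- For `r ∈ ℕ` (so `r ≥ 1`) and any integer `k ≥ 2r−1`, let `G = P_k` be
the path whose vertices in order are `v_1, …, v_k`.  Let `S` be the shield of `G` with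
`S(v_1) = S(v_k) = 1` and `S(v_i) = r+1` for `2 ≤ i ≤ k−1`, and let `T` be the target that is
identically `r`.  Then `G` is `ST⁽⁴⁾`-`(S,T)`-degenerate. -/
theorem st4Deg_path (r k : ℕ) (hr : 1 ≤ r) (hk : 2 * r - 1 ≤ k) :
    ST4Deg (SimpleGraph.pathGraph k)
      (fun v => if v.val = 0 ∨ v.val = k - 1 then 1 else r + 1)
      (fun _ => r) := by
  refine good_sweeps hr hk r le_rfl _ ?_
  have h0 : sweep k (r - r) (k / 2) = fun _ => 0 := by
    funext j
    unfold sweep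
    split_ifs <;> omega
  rw [h0]
  refine ⟨?_, ?_, ?_⟩
  · intro i
    simp only [Finset.mem_univ, true_iff]
    omega
  · intro i _
    simp
  · intro i _
    simp [shadeCount, shield₀]

end StrictDeg
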